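/- Let m ≥ 2 be an integer and let M, N be coprime integers with N odd and positive, so that ζ = e^{2πiM/N} is a primitive odd Nth root of unity. Then lim_{t→0⁺} ((2m−1)/2)·e^{(2πiM/N − t)(2m−3)²/(8(2m−1))}·P_m(e^{2πiM/N − t}) = e^{2πiM(2m−3)²/(8(2m−1)N)}·Z_{m,N}(ζ). -/

import Mathlib

open Finset

/-- The q-Pochhammer symbol `(x;q)_n = ∏_{j=0}^{n-1} (1 - x q^j)`. -/
noncomputable def qPoch (x q : ℂ) (n : ℕ) : ℂ := ∏ j ∈ Finset.range n, (1 - x * q ^ j)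

/-- The Gaussian binomial coefficient `[n choose k]_q`. -/
noncomputable def qBinom (q : ℂ) (n k : ℕ) : ℂ :=
  if k ≤ n then qPoch q q n / (qPoch q q (n - k) * qPoch q q k) else 0

/-- Extend a tuple `g : Fin k → ℕ` to `ℕ → ℕ` by zero. -/
def pad (k : ℕ) (g : Fin k → ℕ) : ℕ → ℕ := fun j => if h : j < k then g ⟨j, h⟩ else 0

/-- The general term of the multi-sum `P_m(q)`: here `n j` denotes `n_{j+1}` (0-based indexing),
so `n (m-2)` is `n_{m-1}` and `n 0` is `n_1`. -/
noncomputable def Pterm (m : ℕ) (q : ℂ) (n : ℕ → ℕ) : ℂ :=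
  (-1) ^ (n (m - 2)) *
    q ^ (n (m - 2) * (n (m - 2) + 1) / 2 + ∑ j ∈ Finset.range (m - 2), ((n j) ^ 2 + n j)) /
    qPoch (-q) q (n 0) *
    ∏ i ∈ Finset.range (m - 2), qBinom q (n (i + 1)) (n i)

/-- The multi-sum `P_m(q)`. -/
noncomputable def P (m : ℕ) (q : ℂ) : ℂ := ∑' n : Fin (m - 1) → ℕ, Pterm m q (pad (m - 1) n)

/-- The truncated multi-sum `Z_{m,N}(q)`. -/
noncomputable def Z (m N : ℕ) (q : ℂ) : ℂ :=
  ∑ n ∈ Fintype.piFinset (fun _ : Fin (m - 1) => Finset.range N), Pterm m q (pad (m - 1) n)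

/-- The odd periodic function `χ_{4m-2}`. -/
def chiP (m : ℕ) (k : ℤ) : ℤ :=
  if k % (4 * m - 2) = (2 * (m : ℤ) - 3) % (4 * m - 2) then 1
  else if k % (4 * m - 2) = (2 * (m : ℤ) + 1) % (4 * m - 2) then -1
  else 0

/-! Iterating the Bailey chain expands the inner sums of `P` and `Z`, and a conjugate Bailey pair
evaluates the alternating outer sum. For `|q| < 1` this writes `P` as the partial theta series
`∑ q ^ e(r) * (1 - q ^ (2 * r + 1))` with `e` quadratic. At `q = ζ` the boundary terms of the outer
sum truncated at `N` vanish because `ζ ^ N = 1`, but its value has a pole at the base point `b = 1`;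
so the identity is proved relative to `b = c ^ 2`, where it reads `(1 - c ^ (2 * N)) * Z_c = θ(c)`
for a deformation `Z_c` of `Z` and a finite theta sum `θ`. Differentiating at `c = 1` evaluates `Z`.

For the radial limit, complete the square in `e(r)` and split `r` into residue classes modulo `N`.
Each class contributes a shifted Gaussian sum. These diverge as `t → 0⁺`, but
`∑ j, (exp (-s * j ^ 2) - exp (-s * (j + b) ^ 2)) → b` as `s → 0⁺`, and the divergent parts of the
two halves of the series cancel because `r ↦ N - 1 - r` exchanges their coefficients. What remains
is a multiple of `θ'(1)`, hence of `Z`. -/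

section QPochhammer

variable {q x : ℂ} {n : ℕ}

lemma qPoch_zero (x q : ℂ) : qPoch x q 0 = 1 := prod_range_zero _

lemma qPoch_succ (x q : ℂ) (n : ℕ) : qPoch x q (n + 1) = qPoch x q n * (1 - x * q ^ n) :=
  prod_range_succ _ n

lemma qPoch_succ' (x q : ℂ) (n : ℕ) : qPoch x q (n + 1) = (1 - x) * qPoch (x * q) q n := by
  simp only [qPoch, prod_range_succ', pow_zero, mul_one, mul_comm _ (1 - x), mul_assoc, ← pow_succ']

lemma qPoch_ne_zero_iff : qPoch x q n ≠ 0 ↔ ∀ j < n, x * q ^ j ≠ 1 := by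
  simp only [qPoch, prod_ne_zero_iff, mem_range, sub_ne_zero, ne_comm (a := (1 : ℂ))]

lemma qPoch_ne_zero_of_le {i : ℕ} (hi : i ≤ n) (h : qPoch x q n ≠ 0) : qPoch x q i ≠ 0 :=
  qPoch_ne_zero_iff.2 fun j hj => qPoch_ne_zero_iff.1 h j (hj.trans_le hi)

lemma one_sub_mul_pow_ne_zero (h : qPoch x q (n + 1) ≠ 0) : 1 - x * q ^ n ≠ 0 :=
  right_ne_zero_of_mul (qPoch_succ x q n ▸ h)

lemma one_sub_pow_succ_ne_zero (h : qPoch q q (n + 1) ≠ 0) : 1 - q ^ (n + 1) ≠ 0 := by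
  simpa only [pow_succ'] using one_sub_mul_pow_ne_zero h

lemma qPoch_mul_ne_zero (h : ∀ s, qPoch x q s ≠ 0) (s : ℕ) : qPoch (x * q) q s ≠ 0 :=
  right_ne_zero_of_mul (qPoch_succ' x q s ▸ h (s + 1))

lemma one_sub_ne_zero_of_qPoch (h : ∀ s, qPoch x q s ≠ 0) : 1 - x ≠ 0 :=
  left_ne_zero_of_mul (qPoch_succ' x q 0 ▸ h 1)

end QPochhammer

section QBinomial

variable {q : ℂ} {n : ℕ}

lemma qBinom_zero_right (h : qPoch q q n ≠ 0) : qBinom q n 0 = 1 := by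
  simp only [qBinom, zero_le, if_true, Nat.sub_zero, qPoch_zero, mul_one, div_self h]

lemma qBinom_eq_zero_of_lt {k : ℕ} (h : n < k) : qBinom q n k = 0 :=
  if_neg h.not_ge

lemma qBinom_add_left (q : ℂ) (d k : ℕ) :
    qBinom q (k + d) k = qPoch q q (k + d) / (qPoch q q d * qPoch q q k) := by
  rw [qBinom, if_pos (Nat.le_add_right k d), Nat.add_sub_cancel_left]

lemma qBinom_self (h : qPoch q q n ≠ 0) : qBinom q n n = 1 := by
  simpa only [add_zero, qPoch_zero, one_mul, div_self h] using qBinom_add_left q 0 n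

lemma qBinom_succ_succ_mul (h : qPoch q q (n + 1) ≠ 0) (k : ℕ) :
    qBinom q (n + 1) (k + 1) * (1 - q ^ (k + 1)) = (1 - q ^ (n + 1)) * qBinom q n k := by
  obtain hk | hk := lt_or_ge n k
  · rw [qBinom_eq_zero_of_lt hk, qBinom_eq_zero_of_lt (by lia), zero_mul, mul_zero]
  obtain ⟨d, rfl⟩ := Nat.exists_eq_add_of_le hk
  have hd : qPoch q q d ≠ 0 := qPoch_ne_zero_of_le (by lia) h
  have hk' : qPoch q q (k + 1) ≠ 0 := qPoch_ne_zero_of_le (by lia) h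
  have hk1 : qPoch q q k ≠ 0 := qPoch_ne_zero_of_le (by lia) h
  have hk2 := one_sub_pow_succ_ne_zero hk'
  rw [show k + d + 1 = (k + 1) + d by ring, qBinom_add_left, qBinom_add_left,
    show (k + 1) + d = k + d + 1 by ring, qPoch_succ, qPoch_succ, ← pow_succ', ← pow_succ']
  field_simp

lemma qBinom_succ_succ (h : qPoch q q (n + 1) ≠ 0) (k : ℕ) :
    qBinom q (n + 1) (k + 1) = qBinom q n (k + 1) + q ^ (n - k) * qBinom q n k := by
  obtain hk | rfl | hk := lt_trichotomy n k
  · simp only [qBinom_eq_zero_of_lt hk, qBinom_eq_zero_of_lt (hk.trans (Nat.lt_succ_self k)),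
      qBinom_eq_zero_of_lt (Nat.succ_lt_succ hk), mul_zero, add_zero]
  · rw [qBinom_self h, qBinom_self (qPoch_ne_zero_of_le n.le_succ h),
      qBinom_eq_zero_of_lt n.lt_succ_self, Nat.sub_self, pow_zero, one_mul, zero_add]
  obtain ⟨d, rfl⟩ := Nat.exists_eq_add_of_lt hk
  have hd : qPoch q q (d + 1) ≠ 0 := qPoch_ne_zero_of_le (by lia) h
  have hk' : qPoch q q (k + 1) ≠ 0 := qPoch_ne_zero_of_le (by lia) h
  have hd0 : qPoch q q d ≠ 0 := qPoch_ne_zero_of_le (by lia) h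
  have hk0 : qPoch q q k ≠ 0 := qPoch_ne_zero_of_le (by lia) h
  have hd1 := one_sub_pow_succ_ne_zero hd
  have hk1 := one_sub_pow_succ_ne_zero hk'
  rw [show k + d + 1 + 1 = (k + 1) + (d + 1) by ring, qBinom_add_left,
    show k + d + 1 = (k + 1) + d by ring, qBinom_add_left,
    show (k + 1) + d = k + (d + 1) by ring, qBinom_add_left, Nat.add_sub_cancel_left,
    show k + 1 + (d + 1) = k + (d + 1) + 1 by ring]
  simp only [qPoch_succ q q, ← pow_succ']
  field_simp
  ring

end QBinomial

section QFalling

/-- The `q`-falling factorial `(1 - q^n)(1 - q^(n-1)) ⋯ (1 - q^(n-r+1))`; it vanishes for `r > n`,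
when truncated subtraction produces the factor `1 - q^0`. -/
noncomputable def qFalling (q : ℂ) (n r : ℕ) : ℂ := ∏ i ∈ range r, (1 - q ^ (n - i))

lemma qFalling_zero_right (q : ℂ) (n : ℕ) : qFalling q n 0 = 1 := prod_range_zero _

lemma qFalling_succ (q : ℂ) (n r : ℕ) :
    qFalling q n (r + 1) = qFalling q n r * (1 - q ^ (n - r)) := prod_range_succ _ r

lemma qFalling_succ_succ (q : ℂ) (n r : ℕ) :
    qFalling q (n + 1) (r + 1) = (1 - q ^ (n + 1)) * qFalling q n r := by
  simp only [qFalling, prod_range_succ', Nat.succ_sub_succ, Nat.sub_zero, mul_comm]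

lemma qFalling_eq_zero_of_lt (q : ℂ) {n r : ℕ} (h : n < r) : qFalling q n r = 0 :=
  prod_eq_zero (mem_range.2 h) (by rw [Nat.sub_self, pow_zero, sub_self])

lemma qFalling_mul_qPoch (q : ℂ) (d r : ℕ) :
    qFalling q (d + r) r * qPoch q q d = qPoch q q (d + r) := by
  induction r with
  | zero => rw [qFalling_zero_right, one_mul, add_zero]
  | succ r ih =>
    rw [← add_assoc, qFalling_succ_succ, qPoch_succ, ← ih, ← pow_succ']
    ring

end QFalling

section Vandermonde

variable {q : ℂ}

lemma pow_sub_mul_qBinom_mul_pow_div_qPoch_succ {n s : ℕ} (hs : s ≤ n) {b : ℂ}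
    (hb : qPoch (b * q) q (s + 1) ≠ 0) :
    q ^ (n - s) * qBinom q n s * b ^ (s + 1) * q ^ (s + 1) ^ 2 / qPoch (b * q) q (s + 1) =
      b * q ^ (n + 1) / (1 - b * q) *
        (qBinom q n s * (b * q) ^ s * q ^ s ^ 2 / qPoch (b * q * q) q s) := by
  obtain ⟨d, rfl⟩ := Nat.exists_eq_add_of_le hs
  rw [qPoch_succ'] at hb ⊢
  have h1 := left_ne_zero_of_mul hb
  rw [Nat.add_sub_cancel_left]
  field_simp
  ring

lemma sum_qBinom_mul_pow_div_qPoch {n : ℕ} (hq : qPoch q q n ≠ 0) {b : ℂ}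
    (hb : ∀ s, qPoch (b * q) q s ≠ 0) :
    ∑ s ∈ range (n + 1), qBinom q n s * b ^ s * q ^ s ^ 2 / qPoch (b * q) q s =
      1 / qPoch (b * q) q n := by
  induction n generalizing b with
  | zero => simp [qPoch_zero, qBinom_self hq]
  | succ n ih =>
    have hqn : qPoch q q n ≠ 0 := qPoch_ne_zero_of_le n.le_succ hq
    have hbq := qPoch_mul_ne_zero hb
    have first : ∑ s ∈ range (n + 1), qBinom q n (s + 1) * b ^ (s + 1) * q ^ (s + 1) ^ 2 /
        qPoch (b * q) q (s + 1) + 1 = 1 / qPoch (b * q) q n := by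
      rw [← ih hqn hb, sum_range_succ, qBinom_eq_zero_of_lt n.lt_succ_self, sum_range_succ' _ n]
      simp [qPoch_zero, qBinom_zero_right hqn]
    have second : ∑ s ∈ range (n + 1), q ^ (n - s) * qBinom q n s * b ^ (s + 1) *
        q ^ (s + 1) ^ 2 / qPoch (b * q) q (s + 1) =
          b * q ^ (n + 1) / (1 - b * q) * (1 / qPoch (b * q * q) q n) := by
      rw [← ih hqn hbq, mul_sum]
      exact sum_congr rfl fun s hs =>
        pow_sub_mul_qBinom_mul_pow_div_qPoch_succ (mem_range_succ_iff.1 hs) (hb (s + 1))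
    have split : ∑ s ∈ range (n + 2), qBinom q (n + 1) s * b ^ s * q ^ s ^ 2 / qPoch (b * q) q s =
        1 / qPoch (b * q) q n + b * q ^ (n + 1) / (1 - b * q) * (1 / qPoch (b * q * q) q n) := by
      rw [← first, ← second, sum_range_succ', add_right_comm, ← sum_add_distrib]
      simp only [qBinom_succ_succ hq, qBinom_zero_right hq, qPoch_zero, ← add_div, add_mul]
      simp
    have h1 := one_sub_mul_pow_ne_zero (hb (n + 1))
    have h2 := hb n
    have h3 : qPoch (b * q) q n * (1 - b * q * q ^ n) = (1 - b * q) * qPoch (b * q * q) q n :=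
      (qPoch_succ _ _ _).symm.trans (qPoch_succ' _ _ _)
    rw [split, mul_one_div, div_div, ← h3, qPoch_succ]
    field_simp
    ring

end Vandermonde

section BaileyChain

variable {q : ℂ}

lemma qPoch_add_three (b q : ℂ) (n : ℕ) :
    qPoch (b * q) q (n + 3) =
      (1 - b * q) * ((1 - b * q ^ 2) * qPoch (b * q ^ 2 * q) q (n + 1)) := by
  rw [qPoch_succ', qPoch_succ', show b * q * q = b * q ^ 2 by ring]

lemma qBinom_mul_qFalling_div_qPoch_succ {n : ℕ} (hq : qPoch q q (n + 1) ≠ 0) (b : ℂ) {r s : ℕ}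
    (hb : qPoch (b * q) q (s + r + 3) ≠ 0) :
    b ^ (s + 1) * q ^ ((s + 1) ^ 2 + (s + 1)) * qBinom q (n + 1) (s + 1) *
        (qFalling q (s + 1) (r + 1) / qPoch (b * q) q (s + r + 3)) =
      (1 - q ^ (n + 1)) * (b * q ^ 2) / ((1 - b * q) * (1 - b * q ^ 2)) *
        ((b * q ^ 2) ^ s * q ^ (s ^ 2 + s) * qBinom q n s *
          (qFalling q s r / qPoch (b * q ^ 2 * q) q (s + r + 1))) := by
  rw [qPoch_add_three] at hb ⊢
  obtain ⟨h1, h2, hp⟩ : 1 - b * q ≠ 0 ∧ 1 - b * q ^ 2 ≠ 0 ∧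
      qPoch (b * q ^ 2 * q) q (s + r + 1) ≠ 0 := by simpa only [mul_ne_zero_iff] using hb
  rw [qFalling_succ_succ]
  generalize qPoch (b * q ^ 2 * q) q (s + r + 1) = p at hp ⊢
  field_simp
  linear_combination b ^ (s + 1) * q ^ (s ^ 2 + 3 * s + 2) * qFalling q s r *
    qBinom_succ_succ_mul hq s

lemma sum_qBinom_mul_qFalling_div_qPoch (r : ℕ) {n : ℕ} (hq : qPoch q q n ≠ 0) {b : ℂ}
    (hb : ∀ s, qPoch (b * q) q s ≠ 0) :
    ∑ s ∈ range (n + 1), b ^ s * q ^ (s ^ 2 + s) * qBinom q n s *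
        (qFalling q s r / qPoch (b * q) q (s + r + 1)) =
      b ^ r * q ^ (r ^ 2 + r) * (qFalling q n r / qPoch (b * q) q (n + r + 1)) := by
  induction r generalizing n b with
  | zero =>
    have h1 := one_sub_ne_zero_of_qPoch hb
    have h := congrArg (· / (1 - b * q)) (sum_qBinom_mul_pow_div_qPoch hq (qPoch_mul_ne_zero hb))
    simp only [sum_div, add_zero, qFalling_zero_right, qPoch_succ' (b * q)] at h ⊢
    convert h using 1
    · refine sum_congr rfl fun s _ => ?_
      field_simp
      ring
    · field_simp
      ring
  | succ r ih =>
    obtain - | n := n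
    · simp [qFalling_eq_zero_of_lt]
    have hb3 (s : ℕ) : qPoch (b * q ^ 2 * q) q s ≠ 0 := by
      convert qPoch_mul_ne_zero (qPoch_mul_ne_zero hb) s using 2
      ring
    have index (s : ℕ) : s + 1 + (r + 1) + 1 = s + r + 3 := by ring
    rw [sum_range_succ', qFalling_eq_zero_of_lt q r.succ_pos, zero_div, mul_zero, add_zero]
    simp only [index, qBinom_mul_qFalling_div_qPoch_succ hq b (hb _), ← mul_sum]
    rw [ih (qPoch_ne_zero_of_le n.le_succ hq) hb3, qFalling_succ_succ, qPoch_add_three]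
    simp only [div_eq_mul_inv, mul_inv]
    ring

/-- The sequence `α` of the Bailey pair relative to `c ^ 2` obtained by `l` steps of the Bailey
chain from the pair with `β_n = 1 / ((q; q)_n (-cq; q)_n)`. The multi-sums `P` and `Z` are the case
`c = 1`; the parameter is there because the evaluation at a root of unity degenerates at `c = 1`. -/
noncomputable def baileyAlpha (c q : ℂ) (l r : ℕ) : ℂ :=
  (-c) ^ r * q ^ r ^ 2 * (1 - c ^ 2 * q ^ (2 * r + 1)) * qPoch (c ^ 2 * q) q r / qPoch q q r *
    ((c ^ 2) ^ r * q ^ (r ^ 2 + r)) ^ l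

/-- The sequence `(q; q)_n β_n` matching `baileyAlpha`. Multiplying by `(q; q)_n` turns the Bailey
chain into the iterated sum with Gaussian binomial kernel which defines `P` and `Z` for `c = 1`. -/
noncomputable def baileyBeta (c q : ℂ) : ℕ → ℕ → ℂ
  | 0, n => 1 / qPoch (-(c * q)) q n
  | l + 1, n =>
    ∑ r ∈ range (n + 1), (c ^ 2) ^ r * q ^ (r ^ 2 + r) * qBinom q n r * baileyBeta c q l r

variable {c : ℂ}

lemma baileyAlpha_succ (l r : ℕ) :
    baileyAlpha c q (l + 1) r = (c ^ 2) ^ r * q ^ (r ^ 2 + r) * baileyAlpha c q l r := by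
  rw [baileyAlpha, baileyAlpha, pow_succ]
  ring

lemma sum_baileyAlpha_telescope {n : ℕ} (hq : qPoch q q (n + 1) ≠ 0)
    (hb : ∀ s, qPoch (c ^ 2 * q) q s ≠ 0) {K : ℕ} (hK : K ≤ n + 1) :
    ∑ r ∈ range (K + 1), ((1 + c * q ^ (n + 1)) *
        (baileyAlpha c q 0 r * (qFalling q (n + 1) r / qPoch (c ^ 2 * q) q (n + 1 + r + 1))) -
        baileyAlpha c q 0 r * (qFalling q n r / qPoch (c ^ 2 * q) q (n + r + 1))) =
      c * (1 + c * q ^ (K + 1)) * (-c) ^ K * q ^ (K ^ 2 + K + n + 1) *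
        qPoch (c ^ 2 * q) q (K + 1) / qPoch q q K *
        (qFalling q n K / qPoch (c ^ 2 * q) q (n + K + 2)) := by
  induction K with
  | zero =>
    have h1 := hb (n + 1)
    have h2 := one_sub_mul_pow_ne_zero (hb (n + 1 + 1))
    have h3 : c ^ 2 * q * q ^ (n + 1) = c ^ 2 * q ^ (n + 2) := by ring
    rw [h3] at h2
    simp only [baileyAlpha, zero_add, sum_range_one, qFalling_zero_right, qPoch_zero, add_zero,
      qPoch_succ _ _ (n + 1), qPoch_succ _ _ 0, h3]
    field_simp
    ring
  | succ K ih =>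
    rw [sum_range_succ, ih (by lia)]
    obtain ⟨d, rfl⟩ := Nat.exists_eq_add_of_le (Nat.le_of_succ_le_succ hK)
    have h1 := hb (K + d + K + 2)
    have h2 := one_sub_mul_pow_ne_zero (hb (K + d + K + 2 + 1))
    have h3 := qPoch_ne_zero_of_le (i := K + 1) (by lia) hq
    have h4 := qPoch_ne_zero_of_le K.le_succ h3
    have h5 := one_sub_pow_succ_ne_zero h3
    rw [show K + d + 1 + (K + 1) + 1 = K + d + K + 2 + 1 by ring,
      show K + d + (K + 1) + 1 = K + d + K + 2 by ring,
      show K + d + (K + 1) + 2 = K + d + K + 2 + 1 by ring, qFalling_succ_succ, qFalling_succ,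
      Nat.add_sub_cancel_left, qPoch_succ _ _ (K + 1), qPoch_succ _ _ (K + d + K + 2), baileyAlpha,
      qPoch_succ q q K, ← pow_succ' q K]
    field_simp
    ring

lemma baileyBeta_zero_eq_sum {n : ℕ} (hq : qPoch q q n ≠ 0)
    (hb : ∀ s, qPoch (c ^ 2 * q) q s ≠ 0) (hc : ∀ s, qPoch (-(c * q)) q s ≠ 0) :
    baileyBeta c q 0 n = ∑ r ∈ range (n + 1),
      baileyAlpha c q 0 r * (qFalling q n r / qPoch (c ^ 2 * q) q (n + r + 1)) := by
  induction n with
  | zero =>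
    have := hb 1
    simp only [qPoch_succ, qPoch_zero, one_mul, pow_zero, mul_one] at this
    simp [baileyBeta, baileyAlpha, qPoch_succ, qPoch_zero, qFalling_zero_right, this]
  | succ n ih =>
    have h := sum_baileyAlpha_telescope hq hb le_rfl
    rw [qFalling_eq_zero_of_lt q n.lt_succ_self, zero_div, mul_zero, sum_sub_distrib, ← mul_sum,
      sum_range_succ (fun r => baileyAlpha c q 0 r * (qFalling q n r / _)),
      qFalling_eq_zero_of_lt q n.lt_succ_self, zero_div, mul_zero, add_zero,
      ← ih (qPoch_ne_zero_of_le n.le_succ hq), sub_eq_zero] at h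
    have h1 := one_sub_mul_pow_ne_zero (hc (n + 1))
    have h2 : 1 - -(c * q) * q ^ n = 1 + c * q ^ (n + 1) := by ring
    rw [h2] at h1
    rw [← mul_right_inj' h1, h, baileyBeta, baileyBeta, qPoch_succ, h2]
    have := hc n
    field_simp

lemma baileyBeta_eq_sum (l : ℕ) {n L : ℕ} (hn : n < L) (hq : qPoch q q n ≠ 0)
    (hb : ∀ s, qPoch (c ^ 2 * q) q s ≠ 0) (hc : ∀ s, qPoch (-(c * q)) q s ≠ 0) :
    baileyBeta c q l n = ∑ r ∈ range L,
      baileyAlpha c q l r * (qFalling q n r / qPoch (c ^ 2 * q) q (n + r + 1)) := by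
  induction l generalizing n with
  | zero =>
    rw [baileyBeta_zero_eq_sum hq hb hc]
    refine sum_subset (range_subset_range.2 hn) fun r _ hr => ?_
    rw [qFalling_eq_zero_of_lt q (by simpa using hr), zero_div, mul_zero]
  | succ l ih =>
    calc baileyBeta c q (l + 1) n
        = ∑ s ∈ range (n + 1), ∑ r ∈ range L, baileyAlpha c q l r *
            ((c ^ 2) ^ s * q ^ (s ^ 2 + s) * qBinom q n s *
              (qFalling q s r / qPoch (c ^ 2 * q) q (s + r + 1))) := by
          refine sum_congr rfl fun s hs => ?_
          have hs' := mem_range_succ_iff.1 hs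
          rw [ih (hs'.trans_lt hn) (qPoch_ne_zero_of_le hs' hq), mul_sum]
          exact sum_congr rfl fun r _ => by ring
      _ = _ := by
          rw [sum_comm]
          refine sum_congr rfl fun r _ => ?_
          rw [← mul_sum, sum_qBinom_mul_qFalling_div_qPoch r hq hb, baileyAlpha_succ]
          ring

end BaileyChain

section ConjugateBaileyPair

/-- The `n`-th triangular number, i.e. the exponent of the outermost summation variable of `P`. -/
def triangular (n : ℕ) : ℕ := n * (n + 1) / 2

lemma two_mul_triangular (n : ℕ) : 2 * triangular n = n * (n + 1) :=
  Nat.mul_div_cancel' (Nat.even_mul_succ_self n).two_dvd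

lemma triangular_zero : triangular 0 = 0 := rfl

lemma triangular_succ (n : ℕ) : triangular (n + 1) = triangular n + (n + 1) := by
  have h1 := two_mul_triangular n
  have h2 := two_mul_triangular (n + 1)
  linarith

lemma le_triangular (n : ℕ) : n ≤ triangular n := by
  have := two_mul_triangular n
  nlinarith

/-- The weight against which the Bailey sequence `baileyAlpha`, relative to `b`, is summed: its sums
over `n` form the sequence `γ` of a conjugate Bailey pair. -/
noncomputable def conjugateWeight (b q : ℂ) (r n : ℕ) : ℂ :=
  (-b) ^ n * q ^ triangular n * (qFalling q n r / qPoch (b * q) q (n + r + 1))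

variable {b q : ℂ}

lemma conjugateWeight_eq_zero_of_lt {r n : ℕ} (h : n < r) : conjugateWeight b q r n = 0 := by
  rw [conjugateWeight, qFalling_eq_zero_of_lt q h, zero_div, mul_zero]

lemma sum_conjugateWeight_zero (hb : ∀ s, qPoch (b * q) q s ≠ 0) (L : ℕ) :
    ∑ n ∈ range L, conjugateWeight b q 0 n =
      1 - (-b) ^ L * q ^ triangular L / qPoch (b * q) q L := by
  induction L with
  | zero => simp [qPoch_zero, triangular_zero]
  | succ L ih =>
    have h0 := hb L
    have h1 := one_sub_mul_pow_ne_zero (hb (L + 1))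
    rw [sum_range_succ, ih, conjugateWeight, qFalling_zero_right, add_zero, triangular_succ,
      qPoch_succ]
    field_simp
    ring

lemma sum_conjugateWeight_succ (hb : ∀ s, qPoch (b * q) q s ≠ 0) (r L : ℕ) :
    (1 - b * q ^ (r + 1)) * ∑ n ∈ range L, conjugateWeight b q (r + 1) n +
        b * q ^ (r + 1) * (1 - q ^ (r + 1)) * ∑ n ∈ range L, conjugateWeight b q r n =
      -((1 - b * q ^ (2 * r + 2)) * (-b) ^ L * q ^ triangular L *
        (qFalling q L (r + 1) / qPoch (b * q) q (L + r + 1))) := by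
  induction L with
  | zero => simp [qFalling_eq_zero_of_lt]
  | succ n ih =>
    rw [sum_range_succ, sum_range_succ, mul_add, mul_add, add_add_add_comm, ih]
    obtain hn | hn := lt_or_ge n r
    · rw [conjugateWeight_eq_zero_of_lt hn, conjugateWeight_eq_zero_of_lt (by lia),
        qFalling_eq_zero_of_lt q (by lia : n < r + 1),
        qFalling_eq_zero_of_lt q (by lia : n + 1 < r + 1)]
      ring
    obtain ⟨d, rfl⟩ := Nat.exists_eq_add_of_le hn
    have h0 := hb (r + d + r + 1)
    have h1 := one_sub_mul_pow_ne_zero (hb (r + d + r + 1 + 1))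
    rw [conjugateWeight, conjugateWeight, qFalling_succ_succ, qFalling_succ,
      Nat.add_sub_cancel_left, triangular_succ,
      show r + d + (r + 1) + 1 = r + d + r + 1 + 1 by ring,
      show r + d + 1 + r + 1 = r + d + r + 1 + 1 by ring, qPoch_succ _ _ (r + d + r + 1)]
    field_simp
    ring

lemma mul_qPoch_eq_of_recursion {γ : ℕ → ℂ}
    (hγ : ∀ r, (1 - b * q ^ (r + 1)) * γ (r + 1) + b * q ^ (r + 1) * (1 - q ^ (r + 1)) * γ r = 0)
    (r : ℕ) :
    γ r * qPoch (b * q) q r = γ 0 * (-b) ^ r * q ^ triangular r * qPoch q q r := by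
  induction r with
  | zero => simp [qPoch_zero, triangular_zero]
  | succ r ih =>
    rw [qPoch_succ, qPoch_succ, triangular_succ]
    linear_combination qPoch (b * q) q r * hγ r - b * q ^ (r + 1) * (1 - q ^ (r + 1)) * ih

/-- The exponent `(2k+3) r (r+1) / 2 - r` of the partial theta function to which `P (k + 2)`
is equal. -/
def thetaExponent (k r : ℕ) : ℕ := triangular r + k * (r ^ 2 + r) + r ^ 2

variable {c : ℂ}

lemma baileyAlpha_mul_of_recursion (l r : ℕ) (hq : qPoch q q r ≠ 0)
    (hb : qPoch (c ^ 2 * q) q r ≠ 0) {γ : ℕ → ℂ}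
    (hγ : ∀ r, (1 - c ^ 2 * q ^ (r + 1)) * γ (r + 1) +
      c ^ 2 * q ^ (r + 1) * (1 - q ^ (r + 1)) * γ r = 0) :
    baileyAlpha c q l r * γ r =
      γ 0 * (q ^ thetaExponent l r * (1 - c ^ 2 * q ^ (2 * r + 1)) * c ^ ((2 * l + 3) * r)) := by
  rw [eq_div_of_mul_eq hb (mul_qPoch_eq_of_recursion hγ r), baileyAlpha, thetaExponent,
    neg_pow, neg_pow (c ^ 2)]
  have sign : (-1 : ℂ) ^ r * (-1) ^ r = 1 := by rw [← mul_pow, neg_one_mul, neg_neg, one_pow]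
  field_simp
  linear_combination γ 0 * q ^ (triangular r + l * (r ^ 2 + r) + r ^ 2) *
    (1 - c ^ 2 * q ^ (2 * r + 1)) * c ^ ((2 * l + 3) * r) * sign

lemma sum_mul_baileyBeta (l : ℕ) {L : ℕ} (hq : ∀ n < L, qPoch q q n ≠ 0)
    (hb : ∀ s, qPoch (c ^ 2 * q) q s ≠ 0) (hc : ∀ s, qPoch (-(c * q)) q s ≠ 0) :
    ∑ n ∈ range L, (-c ^ 2) ^ n * q ^ triangular n * baileyBeta c q l n =
      ∑ r ∈ range L, baileyAlpha c q l r * ∑ n ∈ range L, conjugateWeight (c ^ 2) q r n := by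
  simp only [mul_sum]
  rw [sum_comm]
  refine sum_congr rfl fun n hn => ?_
  have hn' := mem_range.1 hn
  rw [baileyBeta_eq_sum l hn' (hq n hn') hb hc, mul_sum]
  exact sum_congr rfl fun r _ => by rw [conjugateWeight]; ring

end ConjugateBaileyPair

section IteratedSum

lemma pad_cons_zero {k : ℕ} (r : ℕ) (g : Fin k → ℕ) : pad (k + 1) (Fin.cons r g) 0 = r := by
  simp [pad]

lemma pad_cons_succ {k : ℕ} (r : ℕ) (g : Fin k → ℕ) (j : ℕ) :
    pad (k + 1) (Fin.cons r g) (j + 1) = pad k g j := by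
  simp only [pad, Nat.succ_lt_succ_iff]
  exact dite_congr rfl (fun h => Fin.cons_succ (α := fun _ => ℕ) r g ⟨j, h⟩) fun _ => rfl

lemma sum_piFinset_cons {M : Type*} [AddCommMonoid M] (s : Finset ℕ) (k : ℕ)
    (f : (Fin (k + 1) → ℕ) → M) :
    ∑ g ∈ Fintype.piFinset (fun _ : Fin (k + 1) => s), f g =
      ∑ g ∈ Fintype.piFinset (fun _ : Fin k => s), ∑ r ∈ s, f (Fin.cons r g) := by
  rw [← sum_product']
  refine (sum_nbij' (fun p => Fin.cons p.2 p.1) (fun g => (Fin.tail g, g 0)) ?_ ?_ ?_ ?_ ?_).symm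
  · simp +contextual [Fintype.mem_piFinset, Fin.forall_fin_succ]
  · simp +contextual [Fintype.mem_piFinset, Fin.tail]
  · simp
  · simp
  · simp

lemma sum_piFinset_eq_sum_iterate {R : Type*} [CommSemiring R] {L : ℕ} (K : ℕ → ℕ → R)
    (φ : ℕ → R) (k : ℕ) {U : ℕ → ℕ → R}
    (hU : ∀ l, ∀ n < L, U (l + 1) n = ∑ r ∈ range L, K n r * U l r) :
    ∑ g ∈ Fintype.piFinset (fun _ : Fin (k + 1) => range L), φ (pad (k + 1) g k) *
        (∏ i ∈ range k, K (pad (k + 1) g (i + 1)) (pad (k + 1) g i)) * U 0 (pad (k + 1) g 0) =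
      ∑ n ∈ range L, φ n * U k n := by
  induction k generalizing U with
  | zero => simp [sum_piFinset_cons, pad_cons_zero]
  | succ k ih =>
    rw [← ih (U := fun l => U (l + 1)) fun l => hU (l + 1), sum_piFinset_cons]
    refine sum_congr rfl fun g hg => ?_
    have hg0 : pad (k + 1) g 0 < L := mem_range.1 (Fintype.mem_piFinset.1 hg 0)
    simp only [prod_range_succ', pad_cons_succ, pad_cons_zero, zero_add, hU 0 _ hg0, mul_sum]
    exact sum_congr rfl fun r _ => by ring

lemma Z_eq_sum_baileyBeta (k L : ℕ) (q : ℂ) :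
    Z (k + 2) L q = ∑ n ∈ range L, (-1) ^ n * q ^ triangular n * baileyBeta 1 q k n := by
  have step (l n : ℕ) (hn : n < L) : baileyBeta 1 q (l + 1) n =
      ∑ r ∈ range L, q ^ (r ^ 2 + r) * qBinom q n r * baileyBeta 1 q l r := by
    simp only [baileyBeta, one_pow, one_mul]
    refine sum_subset (range_subset_range.2 hn) fun r _ hr => ?_
    rw [qBinom_eq_zero_of_lt (by simpa using hr), mul_zero, zero_mul]
  rw [← sum_piFinset_eq_sum_iterate _ (fun n => (-1) ^ n * q ^ triangular n) k step, Z]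
  refine sum_congr rfl fun g _ => ?_
  change Pterm (k + 2) q (pad (k + 1) g) = _
  simp only [Pterm, Nat.add_sub_cancel, sum_add_distrib, prod_mul_distrib, prod_pow_eq_pow_sum,
    pow_add, baileyBeta, triangular, one_mul]
  ring

end IteratedSum

section UnitDisc

open Filter Topology

variable {q : ℂ}

lemma mul_pow_ne_one {x : ℂ} (hq : ‖q‖ < 1) (hx : ‖x‖ < 1) (j : ℕ) : x * q ^ j ≠ 1 := by
  intro h
  have := mul_lt_one_of_nonneg_of_lt_one_left (norm_nonneg x) hx
    (pow_le_one₀ (n := j) (norm_nonneg q) hq.le)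
  rw [← norm_pow, ← norm_mul, h, norm_one] at this
  exact this.false

lemma qPoch_ne_zero_of_norm_lt {x : ℂ} (hq : ‖q‖ < 1) (hx : ‖x‖ < 1) (n : ℕ) : qPoch x q n ≠ 0 :=
  qPoch_ne_zero_iff.2 fun j _ => mul_pow_ne_one hq hx j

lemma tendsto_qPoch {x : ℂ} (hq : ‖q‖ < 1) (hx : ‖x‖ < 1) :
    ∃ a ≠ 0, Tendsto (qPoch x q) atTop (𝓝 a) := by
  have hs : Summable fun j => ‖-(x * q ^ j)‖ := by
    simpa only [norm_neg, norm_mul, norm_pow] using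
      (summable_geometric_of_lt_one (norm_nonneg q) hq).mul_left ‖x‖
  refine ⟨_, tprod_one_add_ne_zero_of_summable (fun j => ?_) hs, ?_⟩
  · rw [← sub_eq_add_neg, sub_ne_zero]
    exact (mul_pow_ne_one hq hx j).symm
  · simpa only [← sub_eq_add_neg] using!
      (multipliable_one_add_of_summable hs).hasProd.tendsto_prod_nat

lemma exists_norm_le_of_tendsto {u : ℕ → ℂ} {a : ℂ} (h : Tendsto u atTop (𝓝 a)) :
    ∃ C, 0 ≤ C ∧ ∀ n, ‖u n‖ ≤ C := by
  obtain ⟨C, hC⟩ := (Metric.isBounded_range_of_tendsto u h).exists_norm_le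
  exact ⟨C, (norm_nonneg _).trans (hC _ ⟨0, rfl⟩), fun n => hC _ ⟨n, rfl⟩⟩

lemma exists_norm_qPoch_le {x : ℂ} (hq : ‖q‖ < 1) (hx : ‖x‖ < 1) :
    ∃ C, 0 ≤ C ∧ ∀ n, ‖qPoch x q n‖ ≤ C :=
  have ⟨_, _, h⟩ := tendsto_qPoch hq hx
  exists_norm_le_of_tendsto h

lemma exists_norm_inv_qPoch_le {x : ℂ} (hq : ‖q‖ < 1) (hx : ‖x‖ < 1) :
    ∃ C, 0 ≤ C ∧ ∀ n, ‖(qPoch x q n)⁻¹‖ ≤ C :=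
  have ⟨_, ha, h⟩ := tendsto_qPoch hq hx
  exists_norm_le_of_tendsto (h.inv₀ ha)

lemma exists_norm_qBinom_le (hq : ‖q‖ < 1) : ∃ C, 0 ≤ C ∧ ∀ n k, ‖qBinom q n k‖ ≤ C := by
  obtain ⟨A, hA0, hA⟩ := exists_norm_qPoch_le hq hq
  obtain ⟨B, hB0, hB⟩ := exists_norm_inv_qPoch_le hq hq
  refine ⟨A * (B * B), by positivity, fun n k => ?_⟩
  unfold qBinom
  split_ifs
  · rw [div_eq_mul_inv, mul_inv, norm_mul, norm_mul]
    exact mul_le_mul (hA n) (mul_le_mul (hB _) (hB _) (norm_nonneg _) hB0) (by positivity) hA0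
  · rw [norm_zero]
    positivity

lemma exists_norm_qFalling_le (hq : ‖q‖ < 1) : ∃ C, 0 ≤ C ∧ ∀ n r, ‖qFalling q n r‖ ≤ C := by
  obtain ⟨A, hA0, hA⟩ := exists_norm_qPoch_le hq hq
  obtain ⟨B, hB0, hB⟩ := exists_norm_inv_qPoch_le hq hq
  refine ⟨A * B, by positivity, fun n r => ?_⟩
  obtain hn | hn := lt_or_ge n r
  · rw [qFalling_eq_zero_of_lt q hn, norm_zero]
    positivity
  · obtain ⟨d, rfl⟩ := Nat.exists_eq_add_of_le' hn
    rw [eq_div_of_mul_eq (qPoch_ne_zero_of_norm_lt hq hq d) (qFalling_mul_qPoch q d r),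
      div_eq_mul_inv, norm_mul]
    exact mul_le_mul (hA _) (hB d) (norm_nonneg _) hA0

lemma summable_prod_pi {ι : Type*} {f : ι → ℝ} (hf : Summable f) (h0 : ∀ i, 0 ≤ f i) (k : ℕ) :
    Summable fun n : Fin k → ι => ∏ i, f (n i) := by
  induction k with
  | zero => exact Summable.of_finite
  | succ k ih =>
    rw [← (Fin.consEquiv fun _ => ι).summable_iff]
    simpa [Function.comp_def, Fin.prod_univ_succ] using
      hf.mul_of_nonneg ih h0 fun n => prod_nonneg fun i _ => h0 (n i)

lemma summable_Pterm (hq : ‖q‖ < 1) (k : ℕ) :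
    Summable fun n : Fin (k + 1) → ℕ => Pterm (k + 2) q (pad (k + 1) n) := by
  obtain ⟨A, hA0, hA⟩ := exists_norm_inv_qPoch_le hq ((norm_neg q).trans_lt hq)
  obtain ⟨B, -, hB⟩ := exists_norm_qBinom_le hq
  have hgeom := summable_prod_pi (summable_geometric_of_lt_one (norm_nonneg q) hq)
    (fun n => by positivity) (k + 1)
  refine (hgeom.mul_left (A * B ^ k)).of_norm_bounded fun n => ?_
  have hprod : ∏ i, ‖q‖ ^ n i = ‖q‖ ^ ∑ j ∈ range (k + 1), pad (k + 1) n j := by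
    rw [← prod_pow_eq_pow_sum, prod_range]
    exact prod_congr rfl fun i _ => by rw [pad, dif_pos i.is_lt]
  rw [hprod, Pterm, Nat.add_sub_cancel]
  generalize pad (k + 1) n = p
  have hpow : ‖q‖ ^ (p k * (p k + 1) / 2 + ∑ j ∈ range k, (p j ^ 2 + p j)) ≤
      ‖q‖ ^ ∑ j ∈ range (k + 1), p j := by
    refine pow_le_pow_of_le_one (norm_nonneg q) hq.le ?_
    rw [sum_range_succ, add_comm]
    exact add_le_add (le_triangular _) (sum_le_sum fun j _ => Nat.le_add_left _ _)
  have hbinom : ∏ i ∈ range k, ‖qBinom q (p (i + 1)) (p i)‖ ≤ B ^ k :=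
    (prod_le_prod (fun _ _ => norm_nonneg _) fun i _ => hB _ _).trans_eq
      (by rw [prod_const, card_range])
  rw [div_eq_mul_inv, norm_mul, norm_mul, norm_mul, norm_pow, norm_neg, norm_one, one_pow, one_mul,
    norm_pow, norm_prod]
  calc _ ≤ ‖q‖ ^ (∑ j ∈ range (k + 1), p j) * A * B ^ k := by gcongr; exact hA _
    _ = _ := by ring

lemma tendsto_Z (hq : ‖q‖ < 1) (k : ℕ) :
    Tendsto (fun L => Z (k + 2) L q) atTop (𝓝 (P (k + 2) q)) := by
  refine (summable_Pterm hq k).hasSum.comp (tendsto_atTop_finset_of_monotone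
    (fun L L' h => Fintype.piFinset_subset _ _ fun _ => range_mono h) fun n => ?_)
  exact ⟨∑ i, n i + 1, Fintype.mem_piFinset.2 fun i => mem_range_succ_iff.2
    (single_le_sum (fun i _ => Nat.zero_le (n i)) (mem_univ i))⟩

lemma exists_norm_conjugateWeight_le (hq : ‖q‖ < 1) :
    ∃ C, 0 ≤ C ∧ ∀ r n, ‖conjugateWeight 1 q r n‖ ≤ C * ‖q‖ ^ n := by
  obtain ⟨A, hA0, hA⟩ := exists_norm_qFalling_le hq
  obtain ⟨B, hB0, hB⟩ := exists_norm_inv_qPoch_le hq hq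
  refine ⟨A * B, by positivity, fun r n => ?_⟩
  rw [conjugateWeight, div_eq_mul_inv, norm_mul, norm_mul, norm_mul, norm_pow, norm_neg, norm_one,
    one_pow, one_mul, norm_pow, one_mul, mul_comm]
  have hpow := pow_le_pow_of_le_one (norm_nonneg q) hq.le (le_triangular n)
  exact mul_le_mul (mul_le_mul (hA n r) (hB _) (norm_nonneg _) hA0) hpow (by positivity)
    (by positivity)

lemma qPoch_one_mul_ne_zero (hq : ‖q‖ < 1) (s : ℕ) : qPoch (1 * q) q s ≠ 0 :=
  (one_mul q).symm ▸ qPoch_ne_zero_of_norm_lt hq hq s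

lemma summable_conjugateWeight (hq : ‖q‖ < 1) (r : ℕ) : Summable (conjugateWeight 1 q r) := by
  obtain ⟨C, -, hC⟩ := exists_norm_conjugateWeight_le hq
  exact ((summable_geometric_of_lt_one (norm_nonneg q) hq).mul_left C).of_norm_bounded (hC r)

lemma tendsto_neg_one_pow_mul_pow_triangular (hq : ‖q‖ < 1) {x : ℕ → ℂ} {C : ℝ}
    (hx : ∀ n, ‖x n‖ ≤ C) :
    Tendsto (fun n => (-1) ^ n * q ^ triangular n * x n) atTop (𝓝 0) := by
  have hlim := (tendsto_pow_atTop_nhds_zero_of_lt_one (norm_nonneg q) hq).mul_const C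
  rw [zero_mul] at hlim
  refine squeeze_zero_norm (fun n => ?_) hlim
  rw [norm_mul, norm_mul, norm_pow, norm_neg, norm_one, one_pow, one_mul, norm_pow]
  exact mul_le_mul (pow_le_pow_of_le_one (norm_nonneg q) hq.le (le_triangular n)) (hx n)
    (norm_nonneg _) (by positivity)

lemma tsum_conjugateWeight_zero (hq : ‖q‖ < 1) : ∑' n, conjugateWeight 1 q 0 n = 1 := by
  obtain ⟨B, -, hB⟩ := exists_norm_inv_qPoch_le hq hq
  refine tendsto_nhds_unique (summable_conjugateWeight hq 0).hasSum.tendsto_sum_nat ?_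
  simp only [sum_conjugateWeight_zero (qPoch_one_mul_ne_zero hq), div_eq_mul_inv, one_mul]
  simpa only [sub_zero] using (tendsto_neg_one_pow_mul_pow_triangular hq hB).const_sub 1

lemma tsum_conjugateWeight_succ (hq : ‖q‖ < 1) (r : ℕ) :
    (1 - 1 * q ^ (r + 1)) * ∑' n, conjugateWeight 1 q (r + 1) n +
      1 * q ^ (r + 1) * (1 - q ^ (r + 1)) * ∑' n, conjugateWeight 1 q r n = 0 := by
  obtain ⟨A, hA0, hA⟩ := exists_norm_qFalling_le hq
  obtain ⟨B, -, hB⟩ := exists_norm_inv_qPoch_le hq hq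
  have bounded (L : ℕ) : ‖qFalling q L (r + 1) / qPoch (1 * q) q (L + r + 1)‖ ≤ A * B := by
    rw [div_eq_mul_inv, norm_mul, one_mul]
    exact mul_le_mul (hA _ _) (hB _) (norm_nonneg _) hA0
  have boundary := ((tendsto_neg_one_pow_mul_pow_triangular hq bounded).const_mul
    (1 - 1 * q ^ (2 * r + 2))).neg
  rw [mul_zero, neg_zero] at boundary
  have hsum (r : ℕ) := (summable_conjugateWeight hq r).hasSum.tendsto_sum_nat
  refine tendsto_nhds_unique (((hsum (r + 1)).const_mul _).add ((hsum r).const_mul _)) ?_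
  refine boundary.congr fun L => ?_
  rw [sum_conjugateWeight_succ (qPoch_one_mul_ne_zero hq)]
  ring

lemma norm_baileyAlpha_one_le (hq : ‖q‖ < 1) (l r : ℕ) :
    ‖baileyAlpha 1 q l r‖ ≤ 2 * ‖q‖ ^ r := by
  have hone : ‖1 - q ^ (2 * r + 1)‖ ≤ 2 := by
    refine (norm_sub_le _ _).trans ?_
    rw [norm_one, norm_pow]
    linarith [pow_le_one₀ (n := 2 * r + 1) (norm_nonneg q) hq.le]
  have hpow := pow_le_pow_of_le_one (norm_nonneg q) hq.le (Nat.le_self_pow two_ne_zero r)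
  have hchain : (‖q‖ ^ (r ^ 2 + r)) ^ l ≤ 1 :=
    pow_le_one₀ (by positivity) (pow_le_one₀ (norm_nonneg q) hq.le)
  rw [baileyAlpha]
  simp only [one_pow, one_mul]
  rw [mul_div_cancel_right₀ _ (qPoch_ne_zero_of_norm_lt hq hq r)]
  simp only [norm_mul, norm_pow, norm_neg, norm_one, one_pow, one_mul]
  calc _ ≤ ‖q‖ ^ r * 2 * 1 := by gcongr
    _ = _ := by ring

lemma exists_norm_sum_conjugateWeight_le (hq : ‖q‖ < 1) :
    ∃ C, 0 ≤ C ∧ ∀ r L, ‖∑ n ∈ range L, conjugateWeight 1 q r n‖ ≤ C := by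
  obtain ⟨C, hC0, hC⟩ := exists_norm_conjugateWeight_le hq
  have hgeom := summable_geometric_of_lt_one (norm_nonneg q) hq
  refine ⟨∑' n, C * ‖q‖ ^ n, tsum_nonneg fun n => by positivity, fun r L => ?_⟩
  exact (norm_sum_le_of_le _ fun n _ => hC r n).trans
    ((hgeom.mul_left C).sum_le_tsum _ fun n _ => by positivity)

lemma Z_eq_tsum (hq : ‖q‖ < 1) (k L : ℕ) :
    Z (k + 2) L q = ∑' r, baileyAlpha 1 q k r * ∑ n ∈ range L, conjugateWeight 1 q r n := by
  have hb := qPoch_one_mul_ne_zero hq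
  have hc (s : ℕ) : qPoch (-(1 * q)) q s ≠ 0 :=
    qPoch_ne_zero_of_norm_lt hq (by rwa [norm_neg, one_mul]) s
  have h := sum_mul_baileyBeta (c := 1) k (L := L)
    (fun n _ => qPoch_ne_zero_of_norm_lt hq hq n) (by rwa [one_pow]) hc
  rw [Z_eq_sum_baileyBeta, tsum_eq_sum (s := range L) fun r hr => ?_]
  · simpa only [one_pow] using h
  · rw [sum_eq_zero fun n hn => conjugateWeight_eq_zero_of_lt ?_, mul_zero]
    exact (mem_range.1 hn).trans_le (by simpa using hr)

lemma P_eq_tsum (hq : ‖q‖ < 1) (k : ℕ) :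
    P (k + 2) q = ∑' r, q ^ thetaExponent k r * (1 - q ^ (2 * r + 1)) := by
  obtain ⟨C, -, hC⟩ := exists_norm_sum_conjugateWeight_le hq
  have hb := qPoch_one_mul_ne_zero hq
  have hterm (r : ℕ) : baileyAlpha 1 q k r * ∑' n, conjugateWeight 1 q r n =
      q ^ thetaExponent k r * (1 - q ^ (2 * r + 1)) := by
    rw [baileyAlpha_mul_of_recursion k r (qPoch_ne_zero_of_norm_lt hq hq r)
      (by rw [one_pow]; exact hb r) (γ := fun r => ∑' n, conjugateWeight 1 q r n)
      (by simpa only [one_pow] using tsum_conjugateWeight_succ hq), tsum_conjugateWeight_zero hq]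
    simp only [one_pow, one_mul, mul_one]
  refine tendsto_nhds_unique (tendsto_Z hq k) ?_
  simp only [Z_eq_tsum hq, ← hterm]
  refine tendsto_tsum_of_dominated_convergence
    (((summable_geometric_of_lt_one (norm_nonneg q) hq).mul_left 2).mul_right C)
    (fun r => (summable_conjugateWeight hq r).hasSum.tendsto_sum_nat.const_mul _)
    (.of_forall fun L r => ?_)
  rw [norm_mul]
  exact mul_le_mul (norm_baileyAlpha_one_le hq k r) (hC r L) (norm_nonneg _) (by positivity)

end UnitDisc

section RootOfUnity

variable {ζ : ℂ} {N : ℕ}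

lemma two_mul_thetaExponent (k r : ℕ) :
    2 * thetaExponent k r = (2 * k + 3) * r ^ 2 + (2 * k + 1) * r := by
  rw [thetaExponent, mul_add, mul_add, two_mul_triangular]
  ring

lemma pow_eq_pow_of_two_mul_eq (hN : Odd N) (hζ : ζ ^ N = 1) {x y : ℕ} {d : ℤ}
    (h : 2 * (x : ℤ) = 2 * y + N * d) : ζ ^ x = ζ ^ y := by
  refine pow_eq_pow_of_modEq (Int.natCast_modEq_iff.1 (Int.modEq_iff_dvd.2 ?_).symm) hζ
  have hcop : IsCoprime (N : ℤ) 2 := Nat.isCoprime_iff_coprime.2 (Nat.coprime_two_right.2 hN)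
  exact hcop.dvd_of_dvd_mul_left ⟨d, by linarith⟩

lemma periodic_pow_thetaExponent (hN : Odd N) (hζ : ζ ^ N = 1) (k : ℕ) :
    Function.Periodic (fun r => ζ ^ thetaExponent k r) N := fun r => by
  have h1 := two_mul_thetaExponent k (r + N)
  have h2 := two_mul_thetaExponent k r
  refine pow_eq_pow_of_two_mul_eq hN hζ (d := (2 * k + 3) * (2 * r + N) + (2 * k + 1)) ?_
  zify at h1 h2
  rw [h1, h2]
  ring

lemma periodic_pow_thetaExponent_add (hN : Odd N) (hζ : ζ ^ N = 1) (k : ℕ) :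
    Function.Periodic (fun r => ζ ^ (thetaExponent k r + 2 * r + 1)) N := fun r => by
  have h := periodic_pow_thetaExponent hN hζ k r
  simp only [pow_add, mul_add, pow_mul', hζ, mul_one, one_pow] at h ⊢
  rw [h]

lemma pow_thetaExponent_reflect (hN : Odd N) (hζ : ζ ^ N = 1) (k : ℕ) {r : ℕ} (hr : r < N) :
    ζ ^ thetaExponent k (N - 1 - r) = ζ ^ (thetaExponent k r + 2 * r + 1) := by
  obtain ⟨i, rfl⟩ := Nat.exists_eq_add_of_lt hr
  have h1 := two_mul_thetaExponent k i
  have h2 := two_mul_thetaExponent k r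
  rw [show r + i + 1 - 1 - r = i by lia]
  refine pow_eq_pow_of_two_mul_eq hN hζ (d := (2 * k + 3) * (i - r) - 2) ?_
  zify at h1 h2 ⊢
  linear_combination h1 - h2

lemma sum_pow_thetaExponent_eq (hN : Odd N) (hζ : ζ ^ N = 1) (k : ℕ) :
    ∑ r ∈ range N, ζ ^ thetaExponent k r = ∑ r ∈ range N, ζ ^ (thetaExponent k r + 2 * r + 1) := by
  rw [← sum_range_reflect]
  exact sum_congr rfl fun r hr => pow_thetaExponent_reflect hN hζ k (mem_range.1 hr)

lemma qPoch_self_ne_zero_of_isPrimitiveRoot (hζ : IsPrimitiveRoot ζ N) {n : ℕ} (hn : n < N) :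
    qPoch ζ ζ n ≠ 0 :=
  qPoch_ne_zero_iff.2 fun j hj => by
    rw [← pow_succ']
    exact hζ.pow_ne_one_of_pos_of_lt j.succ_ne_zero (by lia)

lemma qPoch_mul_isPrimitiveRoot (hζ : IsPrimitiveRoot ζ N) (hN : 0 < N) (b : ℂ) :
    qPoch (b * ζ) ζ N = 1 - b ^ N := by
  classical
  have h := hζ.pow_sub_pow_eq_prod_sub_mul 1 b hN
  rw [Polynomial.nthRootsFinset_def, ← Multiset.toFinset_eq hζ.nthRoots_one_nodup, prod_mk,
    hζ.nthRoots_eq hζ.pow_eq_one, Multiset.map_map, one_pow] at h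
  rw [h]
  exact prod_congr rfl fun j _ => by simp only [Function.comp_apply]; ring

lemma qPoch_mul_ne_zero_of_pow_ne_one {b : ℂ} (hζ : ζ ^ N = 1) (hb : b ^ N ≠ 1) (s : ℕ) :
    qPoch (b * ζ) ζ s ≠ 0 := by
  refine qPoch_ne_zero_iff.2 fun j _ h => hb ?_
  calc b ^ N = (b * ζ * ζ ^ j) ^ N := by
        rw [mul_pow, mul_pow, ← pow_mul, mul_comm j, pow_mul, hζ, one_pow, mul_one, mul_one]
    _ = 1 := by rw [h, one_pow]

lemma neg_pow_ne_one {c : ℂ} (hN : Odd N) (hc : (c ^ 2) ^ N ≠ 1) : (-c) ^ N ≠ 1 := fun h => hc <| by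
  rw [hN.neg_pow] at h
  rw [← pow_mul, mul_comm, pow_mul, ← neg_sq, h, one_pow]

lemma pow_triangular_self (hN : Odd N) (hζ : ζ ^ N = 1) : ζ ^ triangular N = 1 := by
  have h := two_mul_triangular N
  rw [← pow_zero ζ]
  refine pow_eq_pow_of_two_mul_eq hN hζ (d := N + 1) ?_
  zify at h
  rw [h, Nat.cast_zero, mul_zero, zero_add]

lemma qFalling_succ_eq_zero_of_pow_eq_one (hζ : ζ ^ N = 1) (r : ℕ) : qFalling ζ N (r + 1) = 0 := by
  obtain _ | N := N
  · exact qFalling_eq_zero_of_lt ζ r.succ_pos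
  · rw [qFalling_succ_succ, hζ, sub_self, zero_mul]

lemma sum_conjugateWeight_zero_of_isPrimitiveRoot {b : ℂ} (hN : Odd N) (hζ : IsPrimitiveRoot ζ N)
    (hb : b ^ N ≠ 1) : ∑ n ∈ range N, conjugateWeight b ζ 0 n = 1 / (1 - b ^ N) := by
  rw [sum_conjugateWeight_zero (qPoch_mul_ne_zero_of_pow_ne_one hζ.pow_eq_one hb),
    qPoch_mul_isPrimitiveRoot hζ hN.pos, pow_triangular_self hN hζ.pow_eq_one, hN.neg_pow]
  have : 1 - b ^ N ≠ 0 := sub_ne_zero.2 hb.symm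
  field_simp
  ring

lemma mul_sum_baileyBeta_of_isPrimitiveRoot (hN : Odd N) (hζ : IsPrimitiveRoot ζ N) {c : ℂ}
    (hc : (c ^ 2) ^ N ≠ 1) (l : ℕ) :
    (1 - (c ^ 2) ^ N) * ∑ n ∈ range N, (-c ^ 2) ^ n * ζ ^ triangular n * baileyBeta c ζ l n =
      ∑ r ∈ range N, ζ ^ thetaExponent l r * (1 - c ^ 2 * ζ ^ (2 * r + 1)) *
        c ^ ((2 * l + 3) * r) := by
  have hζN := hζ.pow_eq_one
  have hb := qPoch_mul_ne_zero_of_pow_ne_one hζN hc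
  have hq n (hn : n < N) := qPoch_self_ne_zero_of_isPrimitiveRoot hζ hn
  have hγ (r : ℕ) := sum_conjugateWeight_succ hb r N
  simp only [qFalling_succ_eq_zero_of_pow_eq_one hζN, zero_div, mul_zero, neg_zero] at hγ
  rw [sum_mul_baileyBeta l hq hb fun s =>
      neg_mul c ζ ▸ qPoch_mul_ne_zero_of_pow_ne_one hζN (neg_pow_ne_one hN hc) s, mul_sum]
  refine sum_congr rfl fun r hr => ?_
  rw [baileyAlpha_mul_of_recursion l r (hq r (mem_range.1 hr)) (hb r)
      (γ := fun r => ∑ n ∈ range N, conjugateWeight (c ^ 2) ζ r n) hγ,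
    sum_conjugateWeight_zero_of_isPrimitiveRoot hN hζ hc]
  have : 1 - (c ^ 2) ^ N ≠ 0 := sub_ne_zero.2 hc.symm
  field_simp

lemma differentiableAt_baileyBeta {c q : ℂ} (hc : ∀ s, qPoch (-(c * q)) q s ≠ 0) (l n : ℕ) :
    DifferentiableAt ℂ (fun c => baileyBeta c q l n) c := by
  induction l generalizing n with
  | zero =>
    have hc' := hc n
    simp only [baileyBeta, qPoch] at hc' ⊢
    fun_prop (disch := assumption)
  | succ l ih =>
    simp only [baileyBeta]
    fun_prop

lemma hasDerivAt_sum_pow_thetaExponent (k L : ℕ) (q : ℂ) :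
    HasDerivAt (fun c : ℂ => ∑ r ∈ range L,
        q ^ thetaExponent k r * (1 - c ^ 2 * q ^ (2 * r + 1)) * c ^ ((2 * k + 3) * r))
      (∑ r ∈ range L,
        ((2 * k + 3) * r * (q ^ thetaExponent k r - q ^ (thetaExponent k r + 2 * r + 1)) -
          2 * q ^ (thetaExponent k r + 2 * r + 1))) 1 := by
  refine HasDerivAt.fun_sum fun r _ => ?_
  have h := (((hasDerivAt_pow 2 (1 : ℂ)).mul_const (q ^ (2 * r + 1))).const_sub 1).const_mul
    (q ^ thetaExponent k r)
  refine (h.fun_mul (hasDerivAt_pow ((2 * k + 3) * r) (1 : ℂ))).congr_deriv ?_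
  push_cast
  ring

lemma two_mul_mul_Z_eq_sum (hN : Odd N) (hζ : IsPrimitiveRoot ζ N) (k : ℕ) :
    2 * N * Z (k + 2) N ζ = -∑ r ∈ range N,
      ((2 * k + 3) * r * (ζ ^ thetaExponent k r - ζ ^ (thetaExponent k r + 2 * r + 1)) -
        2 * ζ ^ (thetaExponent k r + 2 * r + 1)) := by
  have hneg (s : ℕ) : qPoch (-(1 * ζ)) ζ s ≠ 0 := by
    rw [← neg_mul]
    exact qPoch_mul_ne_zero_of_pow_ne_one hζ.pow_eq_one (by rw [hN.neg_one_pow]; norm_num) s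
  have hβ := differentiableAt_baileyBeta hneg k
  have hsum : DifferentiableAt ℂ (fun c => ∑ n ∈ range N,
      (-c ^ 2) ^ n * ζ ^ triangular n * baileyBeta c ζ k n) 1 := by fun_prop
  have hpow : HasDerivAt (fun c : ℂ => (c ^ 2) ^ N) (2 * N) 1 :=
    ((hasDerivAt_pow 2 (1 : ℂ)).fun_pow N).congr_deriv (by simp [mul_comm])
  have hleft : HasDerivAt (fun c => (1 - (c ^ 2) ^ N) * ∑ n ∈ range N,
      (-c ^ 2) ^ n * ζ ^ triangular n * baileyBeta c ζ k n) (-(2 * N * Z (k + 2) N ζ)) 1 :=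
    ((hpow.const_sub 1).fun_mul hsum.hasDerivAt).congr_deriv (by simp [Z_eq_sum_baileyBeta])
  have hright := hasDerivAt_sum_pow_thetaExponent k N ζ
  have hEq := (hleft.continuousAt.eventuallyEq_nhds_iff_eventuallyEq_nhdsNE
    hright.continuousAt).1 <| by
      filter_upwards [hpow.eventually_ne (c := 1) (by simp [hN.pos.ne'])] with c hc
      exact mul_sum_baileyBeta_of_isPrimitiveRoot hN hζ hc k
  rw [← hleft.unique (hright.congr_of_eventuallyEq hEq), neg_neg]

end RootOfUnity

section Gaussian

open Filter Topology

lemma hasDerivAt_gaussian (s x : ℝ) :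
    HasDerivAt (fun x => Real.exp (-s * x ^ 2)) (-2 * s * x * Real.exp (-s * x ^ 2)) x :=
  ((hasDerivAt_pow 2 x).const_mul (-s)).exp.congr_deriv (by push_cast; ring)

lemma hasDerivAt_deriv_gaussian (s x : ℝ) :
    HasDerivAt (fun x => -2 * s * x * Real.exp (-s * x ^ 2))
      ((4 * s ^ 2 * x ^ 2 - 2 * s) * Real.exp (-s * x ^ 2)) x :=
  (((hasDerivAt_id' x).const_mul (-2 * s)).fun_mul (hasDerivAt_gaussian s x)).congr_deriv (by ring)

lemma abs_second_deriv_gaussian_le {s x : ℝ} (hs0 : 0 < s) (hs1 : s ≤ 1) (hx : 0 ≤ x) :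
    |(4 * s ^ 2 * x ^ 2 - 2 * s) * Real.exp (-s * x ^ 2)| ≤ 16 / (x + 1) ^ 2 := by
  have hu : 0 ≤ s * x ^ 2 := by positivity
  have hexp := Real.quadratic_le_exp_of_nonneg hu
  have hfactor : |4 * s ^ 2 * x ^ 2 - 2 * s| ≤ 4 * s * (s * x ^ 2) + 2 * s := by
    rw [abs_le]
    constructor <;> nlinarith
  rw [abs_mul, Real.abs_exp, neg_mul, Real.exp_neg, ← div_eq_mul_inv,
    div_le_div_iff₀ (Real.exp_pos _) (by positivity)]
  calc |4 * s ^ 2 * x ^ 2 - 2 * s| * (x + 1) ^ 2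
      ≤ (4 * s * (s * x ^ 2) + 2 * s) * (2 * (1 + x ^ 2)) := by
        gcongr
        linarith [two_mul_le_add_sq x 1]
    _ = 2 * (4 * s * (s * x ^ 2) + 4 * (s * x ^ 2) ^ 2 + 2 * s + 2 * (s * x ^ 2)) := by ring
    _ ≤ 16 * (1 + s * x ^ 2 + (s * x ^ 2) ^ 2 / 2) := by nlinarith
    _ ≤ 16 * Real.exp (s * x ^ 2) := by gcongr

lemma abs_deriv_gaussian_sub_le {s y : ℝ} (hs0 : 0 < s) (hs1 : s ≤ 1) (hy : 0 ≤ y) {u v : ℝ}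
    (hu : y ≤ u) (hv : y ≤ v) :
    |-2 * s * u * Real.exp (-s * u ^ 2) - -2 * s * v * Real.exp (-s * v ^ 2)| ≤
      16 / (y + 1) ^ 2 * |u - v| :=
  Convex.norm_image_sub_le_of_norm_hasDerivWithin_le (s := Set.Ici y)
    (fun x _ => (hasDerivAt_deriv_gaussian s x).hasDerivWithinAt)
    (fun x hx => (abs_second_deriv_gaussian_le hs0 hs1 (hy.trans hx)).trans
      (by gcongr; exact hx)) (convex_Ici y) hv hu

lemma abs_gaussian_sub_sub_mul_le {s y b : ℝ} (hs0 : 0 < s) (hs1 : s ≤ 1) (hy : 0 ≤ y)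
    (hb : 0 ≤ b) :
    |Real.exp (-s * y ^ 2) - Real.exp (-s * (y + b) ^ 2) -
        b * (Real.exp (-s * y ^ 2) - Real.exp (-s * (y + 1) ^ 2))| ≤
      b * (16 / (y + 1) ^ 2 * |b - 1|) := by
  have hderiv (x : ℝ) : HasDerivAt
      (fun x => b * Real.exp (-s * (y + x) ^ 2) - Real.exp (-s * (y + b * x) ^ 2))
      (b * (-2 * s * (y + x) * Real.exp (-s * (y + x) ^ 2) -
        -2 * s * (y + b * x) * Real.exp (-s * (y + b * x) ^ 2))) x := by
    have h1 := (hasDerivAt_gaussian s (y + x)).comp x ((hasDerivAt_id' x).const_add y)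
    have h2 := (hasDerivAt_gaussian s (y + b * x)).comp x
      (((hasDerivAt_id' x).const_mul b).const_add y)
    exact ((h1.const_mul b).fun_sub h2).congr_deriv (by ring)
  have hbound (x : ℝ) (hx : x ∈ Set.Icc (0 : ℝ) 1) :
      ‖b * (-2 * s * (y + x) * Real.exp (-s * (y + x) ^ 2) -
        -2 * s * (y + b * x) * Real.exp (-s * (y + b * x) ^ 2))‖ ≤
      b * (16 / (y + 1) ^ 2 * |b - 1|) := by
    have hbx := mul_nonneg hb hx.1
    have h := abs_deriv_gaussian_sub_le hs0 hs1 hy (u := y + x) (v := y + b * x)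
      (by linarith [hx.1]) (by linarith)
    rw [norm_mul, Real.norm_of_nonneg hb, Real.norm_eq_abs]
    refine mul_le_mul_of_nonneg_left (h.trans (mul_le_mul_of_nonneg_left ?_ (by positivity))) hb
    rw [show y + x - (y + b * x) = (1 - b) * x by ring, abs_mul, abs_sub_comm, abs_of_nonneg hx.1]
    exact mul_le_of_le_one_right (abs_nonneg _) hx.2
  have h := Convex.norm_image_sub_le_of_norm_hasDerivWithin_le
    (fun x _ => (hderiv x).hasDerivWithinAt) hbound (convex_Icc 0 1)
    (Set.left_mem_Icc.2 zero_le_one) (Set.right_mem_Icc.2 zero_le_one)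
  rw [sub_zero, norm_one, mul_one, Real.norm_eq_abs, mul_one, mul_zero, add_zero] at h
  refine (congrArg abs ?_).trans_le h
  ring

lemma summable_gaussian {s b : ℝ} (hs : 0 < s) (hb : 0 ≤ b) :
    Summable (fun j : ℕ => Real.exp (-s * (j + b) ^ 2)) := by
  refine .of_nonneg_of_le (fun _ => (Real.exp_pos _).le) (fun j => ?_)
    (Real.summable_exp_nat_mul_iff.2 (neg_lt_zero.2 hs))
  have hj : (j : ℝ) ≤ (j : ℝ) ^ 2 := mod_cast Nat.le_self_pow two_ne_zero j
  have : (j : ℝ) ≤ (j + b) ^ 2 := hj.trans (by gcongr; linarith)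
  exact Real.exp_le_exp.2 (by nlinarith)

lemma tendsto_tsum_gaussian_sub_sub_mul {b : ℝ} (hb : 0 ≤ b) :
    Tendsto (fun s : ℝ => ∑' j : ℕ, (Real.exp (-s * (j : ℝ) ^ 2) - Real.exp (-s * (j + b) ^ 2) -
      b * (Real.exp (-s * (j : ℝ) ^ 2) - Real.exp (-s * (j + 1) ^ 2)))) (𝓝[>] 0) (𝓝 0) := by
  rw [show 𝓝 (0 : ℝ) = 𝓝 (∑' _ : ℕ, 0) by rw [tsum_zero]]
  refine tendsto_tsum_of_dominated_convergence
    (bound := fun j : ℕ => b * (16 / ((j : ℝ) + 1) ^ 2 * |b - 1|)) ?_ (fun j => ?_) ?_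
  · have h := (summable_nat_add_iff 1).2 (Real.summable_one_div_nat_pow.2 one_lt_two)
    simpa only [Nat.cast_add, Nat.cast_one, mul_one_div] using
      ((h.mul_left 16).mul_right |b - 1|).mul_left b
  · refine tendsto_nhdsWithin_of_tendsto_nhds ?_
    have hcont : Continuous fun s : ℝ => Real.exp (-s * (j : ℝ) ^ 2) -
        Real.exp (-s * (j + b) ^ 2) -
          b * (Real.exp (-s * (j : ℝ) ^ 2) - Real.exp (-s * (j + 1) ^ 2)) := by fun_prop
    simpa using hcont.tendsto 0
  · filter_upwards [Ioc_mem_nhdsGT (zero_lt_one' ℝ)] with s hs j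
    exact abs_gaussian_sub_sub_mul_le hs.1 hs.2 j.cast_nonneg hb

lemma tendsto_tsum_gaussian_sub {b : ℝ} (hb : 0 ≤ b) :
    Tendsto (fun s : ℝ => ∑' j : ℕ, Real.exp (-s * (j : ℝ) ^ 2) -
      ∑' j : ℕ, Real.exp (-s * (j + b) ^ 2)) (𝓝[>] 0) (𝓝 b) := by
  have h := (tendsto_tsum_gaussian_sub_sub_mul hb).add_const b
  rw [zero_add] at h
  refine h.congr' ?_
  filter_upwards [self_mem_nhdsWithin] with s hs
  have hsum0 : Summable fun j : ℕ => Real.exp (-s * (j : ℝ) ^ 2) := by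
    simpa only [add_zero] using summable_gaussian hs le_rfl
  have hsumb := summable_gaussian hs hb
  have hsum1 := summable_gaussian hs zero_le_one
  rw [(hsum0.sub hsumb).tsum_sub ((hsum0.sub hsum1).mul_left b), tsum_mul_left,
    hsum0.tsum_sub hsumb, hsum0.tsum_sub hsum1]
  have hshift := hsum0.tsum_eq_zero_add
  simp only [Nat.cast_zero, Nat.cast_add, Nat.cast_one, zero_pow two_ne_zero, mul_zero,
    Real.exp_zero] at hshift
  linear_combination (-b) * hshift

lemma tendsto_mul_const_nhdsGT_zero {a : ℝ} (ha : 0 < a) :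
    Tendsto (fun s : ℝ => s * a) (𝓝[>] 0) (𝓝[>] 0) := by
  simpa only [mul_comm] using tendsto_iff_comap.2 (comap_mulLeft_nhdsGT_zero ha).ge

variable {f : ℕ → ℂ} {N : ℕ}

lemma norm_le_sum_of_periodic (hf : Function.Periodic f N) (hN : 0 < N) (n : ℕ) :
    ‖f n‖ ≤ ∑ i ∈ range N, ‖f i‖ := by
  rw [← hf.map_mod_nat]
  exact single_le_sum (f := fun i => ‖f i‖) (fun _ _ => norm_nonneg _)
    (mem_range.2 (n.mod_lt hN))

lemma summable_periodic_mul_gaussian (hf : Function.Periodic f N) (hN : 0 < N) {s β : ℝ}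
    (hs : 0 < s) (hβ : 0 ≤ β) :
    Summable fun n : ℕ => f n * (Real.exp (-s * (n + β) ^ 2) : ℂ) := by
  refine .of_norm_bounded ((summable_gaussian hs hβ).mul_left (∑ i ∈ range N, ‖f i‖)) fun n => ?_
  rw [norm_mul, Complex.norm_of_nonneg (Real.exp_pos _).le]
  gcongr
  exact norm_le_sum_of_periodic hf hN n

lemma tsum_eq_sum_range_tsum {g : ℕ → ℂ} (hg : Summable g) (hN : 0 < N) :
    ∑' n, g n = ∑ i ∈ range N, ∑' j, g (i + N * j) := by
  obtain ⟨n, rfl⟩ := Nat.exists_eq_succ_of_ne_zero hN.ne'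
  rw [Nat.sumByResidueClasses hg (n + 1), sum_range]
  rfl

lemma tsum_periodic_mul_gaussian (hf : Function.Periodic f N) (hN : 0 < N) {s β : ℝ}
    (hs : 0 < s) (hβ : 0 ≤ β) :
    ∑' n : ℕ, f n * (Real.exp (-s * (n + β) ^ 2) : ℂ) =
      ∑ i ∈ range N, f i *
        (∑' j : ℕ, Real.exp (-(s * N ^ 2) * (j + (i + β) / N) ^ 2) : ℝ) := by
  rw [tsum_eq_sum_range_tsum (summable_periodic_mul_gaussian hf hN hs hβ) hN]
  refine sum_congr rfl fun i _ => ?_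
  rw [Complex.ofReal_tsum, ← tsum_mul_left]
  refine tsum_congr fun j => ?_
  have hNR : (N : ℝ) ≠ 0 := by positivity
  rw [mul_comm N j, ← smul_eq_mul j N, (hf.nsmul j) i]
  congr 3
  push_cast [smul_eq_mul]
  field_simp
  ring

lemma tendsto_tsum_periodic_mul_gaussian (hf : Function.Periodic f N) (hN : 0 < N) {β : ℝ}
    (hβ : 0 ≤ β) :
    Tendsto (fun s : ℝ => (∑ i ∈ range N, f i) *
        (∑' j : ℕ, Real.exp (-(s * N ^ 2) * (j : ℝ) ^ 2) : ℝ) -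
      ∑' n : ℕ, f n * (Real.exp (-s * (n + β) ^ 2) : ℂ)) (𝓝[>] 0)
      (𝓝 (∑ i ∈ range N, f i * ((i + β) / N : ℝ))) := by
  have hscale := tendsto_mul_const_nhdsGT_zero (a := (N : ℝ) ^ 2) (by positivity)
  have hterm (i : ℕ) := ((Complex.continuous_ofReal.tendsto _).comp
    ((tendsto_tsum_gaussian_sub (b := (i + β) / N) (by positivity)).comp hscale)).const_mul (f i)
  refine (tendsto_finsetSum (range N) fun i _ => hterm i).congr' ?_
  filter_upwards [self_mem_nhdsWithin] with s hs
  simp only [tsum_periodic_mul_gaussian hf hN hs hβ, sum_mul, ← sum_sub_distrib,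
    Function.comp_apply, Complex.ofReal_sub, mul_sub]

end Gaussian

section RadialLimit

open Filter Topology

lemma thetaExponent_eq_mul_sq_sub (k r : ℕ) :
    (thetaExponent k r : ℝ) = (2 * k + 3) / 2 * (r + (2 * k + 1) / (2 * (2 * k + 3))) ^ 2 -
      (2 * k + 1) ^ 2 / (8 * (2 * k + 3)) := by
  have h : 2 * (thetaExponent k r : ℝ) = (2 * k + 3) * r ^ 2 + (2 * k + 1) * r :=
    mod_cast two_mul_thetaExponent k r
  rw [eq_div_of_mul_eq two_ne_zero ((mul_comm _ _).trans h)]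
  field_simp
  ring

lemma thetaExponent_add_eq_mul_sq_sub (k r : ℕ) :
    ((thetaExponent k r + 2 * r + 1 : ℕ) : ℝ) =
      (2 * k + 3) / 2 * (r + (2 * k + 5) / (2 * (2 * k + 3))) ^ 2 -
        (2 * k + 1) ^ 2 / (8 * (2 * k + 3)) := by
  push_cast
  rw [thetaExponent_eq_mul_sq_sub]
  field_simp
  ring

lemma mul_exp_neg_pow {ζ : ℂ} {t A x E : ℝ} {n : ℕ} (hn : (n : ℝ) = A * x ^ 2 - E) :
    (ζ * (Real.exp (-t) : ℂ)) ^ n =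
      (Real.exp (t * E) : ℂ) * (ζ ^ n * (Real.exp (-(t * A) * x ^ 2) : ℂ)) := by
  have h : Real.exp (-t) ^ n = Real.exp (t * E) * Real.exp (-(t * A) * x ^ 2) := by
    rw [← Real.exp_nat_mul, ← Real.exp_add, hn]
    ring_nf
  rw [mul_pow, ← Complex.ofReal_pow, h, Complex.ofReal_mul]
  ring

variable {ζ : ℂ} {N : ℕ}

lemma P_mul_exp_neg_eq (hN : Odd N) (hζ : IsPrimitiveRoot ζ N) (k : ℕ) {t : ℝ} (ht : 0 < t) :
    P (k + 2) (ζ * (Real.exp (-t) : ℂ)) =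
      (Real.exp (t * ((2 * k + 1) ^ 2 / (8 * (2 * k + 3)))) : ℂ) *
        (∑' r : ℕ, ζ ^ thetaExponent k r * (Real.exp (-(t * ((2 * k + 3) / 2)) *
            (r + (2 * k + 1) / (2 * (2 * k + 3))) ^ 2) : ℂ) -
          ∑' r : ℕ, ζ ^ (thetaExponent k r + 2 * r + 1) * (Real.exp (-(t * ((2 * k + 3) / 2)) *
            (r + (2 * k + 5) / (2 * (2 * k + 3))) ^ 2) : ℂ)) := by
  have hq : ‖ζ * (Real.exp (-t) : ℂ)‖ < 1 := by
    rw [norm_mul, hζ.norm'_eq_one hN.pos.ne', one_mul, Complex.norm_of_nonneg (Real.exp_pos _).le]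
    exact Real.exp_lt_one_iff.2 (neg_lt_zero.2 ht)
  have hs1 := summable_periodic_mul_gaussian (s := t * ((2 * k + 3) / 2))
    (β := (2 * k + 1) / (2 * (2 * k + 3))) (periodic_pow_thetaExponent hN hζ.pow_eq_one k) hN.pos
    (by positivity) (by positivity)
  have hs2 := summable_periodic_mul_gaussian (s := t * ((2 * k + 3) / 2))
    (β := (2 * k + 5) / (2 * (2 * k + 3))) (periodic_pow_thetaExponent_add hN hζ.pow_eq_one k)
    hN.pos (by positivity) (by positivity)
  rw [P_eq_tsum hq, ← hs1.tsum_sub hs2, ← tsum_mul_left]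
  refine tsum_congr fun r => ?_
  rw [mul_sub, mul_sub, mul_one, ← pow_add, ← add_assoc,
    mul_exp_neg_pow (thetaExponent_eq_mul_sq_sub k r),
    mul_exp_neg_pow (thetaExponent_add_eq_mul_sq_sub k r)]

lemma sum_periodic_weights_eq_Z (hN : Odd N) (hζ : IsPrimitiveRoot ζ N) (k : ℕ) :
    ∑ r ∈ range N, ζ ^ (thetaExponent k r + 2 * r + 1) *
        ((r + (2 * k + 5) / (2 * (2 * k + 3))) / N : ℝ) -
      ∑ r ∈ range N, ζ ^ thetaExponent k r * ((r + (2 * k + 1) / (2 * (2 * k + 3))) / N : ℝ) =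
    2 / (2 * k + 3) * Z (k + 2) N ζ := by
  have hNC : (N : ℂ) ≠ 0 := Nat.cast_ne_zero.2 hN.pos.ne'
  have hk : (2 * k + 3 : ℂ) ≠ 0 := mod_cast (by lia : 2 * k + 3 ≠ 0)
  have hterm (r : ℕ) :
      ζ ^ (thetaExponent k r + 2 * r + 1) * ((r + (2 * k + 5) / (2 * (2 * k + 3))) / N : ℝ) -
        ζ ^ thetaExponent k r * ((r + (2 * k + 1) / (2 * (2 * k + 3))) / N : ℝ) =
      -1 / (N * (2 * k + 3)) *
          ((2 * k + 3) * r * (ζ ^ thetaExponent k r - ζ ^ (thetaExponent k r + 2 * r + 1)) -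
            2 * ζ ^ (thetaExponent k r + 2 * r + 1)) +
        (2 * k + 1) / (2 * (2 * k + 3) * N) *
          (ζ ^ (thetaExponent k r + 2 * r + 1) - ζ ^ thetaExponent k r) := by
    push_cast
    field_simp
    ring
  rw [← sum_sub_distrib, sum_congr rfl fun r _ => hterm r, sum_add_distrib, ← mul_sum, ← mul_sum,
    sum_sub_distrib (fun r => ζ ^ (thetaExponent k r + 2 * r + 1)),
    sum_pow_thetaExponent_eq hN hζ.pow_eq_one, sub_self, mul_zero, add_zero,
    ← neg_eq_iff_eq_neg.2 (two_mul_mul_Z_eq_sum hN hζ k)]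
  field_simp

lemma tendsto_P_mul_exp_neg (hN : Odd N) (hζ : IsPrimitiveRoot ζ N) (k : ℕ) :
    Tendsto (fun t : ℝ => P (k + 2) (ζ * (Real.exp (-t) : ℂ))) (𝓝[>] 0)
      (𝓝 (2 / (2 * k + 3) * Z (k + 2) N ζ)) := by
  have hζN := hζ.pow_eq_one
  have hscale := tendsto_mul_const_nhdsGT_zero (a := (2 * k + 3) / 2) (by positivity)
  have h1 := (tendsto_tsum_periodic_mul_gaussian (periodic_pow_thetaExponent hN hζN k) hN.pos
    (β := (2 * k + 1) / (2 * (2 * k + 3))) (by positivity)).comp hscale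
  have h2 := (tendsto_tsum_periodic_mul_gaussian (periodic_pow_thetaExponent_add hN hζN k) hN.pos
    (β := (2 * k + 5) / (2 * (2 * k + 3))) (by positivity)).comp hscale
  have hexp : Tendsto (fun t : ℝ => (Real.exp (t * ((2 * k + 1) ^ 2 / (8 * (2 * k + 3)))) : ℂ))
      (𝓝[>] 0) (𝓝 1) := by
    refine tendsto_nhdsWithin_of_tendsto_nhds (Continuous.tendsto' (by fun_prop) _ _ (by simp))
  have h := hexp.mul (h2.sub h1)
  rw [one_mul, sum_periodic_weights_eq_Z hN hζ] at h
  refine h.congr' ?_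
  filter_upwards [self_mem_nhdsWithin] with t ht
  simp only [P_mul_exp_neg_eq hN hζ k ht, Function.comp_apply, sum_pow_thetaExponent_eq hN hζN,
    sub_sub_sub_cancel_left]

end RadialLimit

theorem stmt6 (m : ℕ) (hm : 2 ≤ m) (M : ℤ) (N : ℕ) (hN : 0 < N) (hNodd : Odd N)
    (hMN : IsCoprime M (N : ℤ)) :
    Filter.Tendsto
      (fun t : ℝ => ((2 * (m : ℂ) - 1) / 2) *
        Complex.exp ((2 * Real.pi * Complex.I * M / N - t) *
          ((2 * (m : ℂ) - 3) ^ 2 / (8 * (2 * m - 1)))) *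
        P m (Complex.exp (2 * Real.pi * Complex.I * M / N - t)))
      (nhdsWithin 0 (Set.Ioi 0))
      (nhds (Complex.exp (2 * Real.pi * Complex.I * M * ((2 * (m : ℂ) - 3) ^ 2) /
          (8 * (2 * m - 1) * N)) *
        Z m N (Complex.exp (2 * Real.pi * Complex.I * M / N)))) := by
  obtain ⟨k, rfl⟩ := Nat.exists_eq_add_of_le' hm
  have hζ : IsPrimitiveRoot (Complex.exp (2 * Real.pi * Complex.I * M / N)) N := by
    simpa only [← mul_div_assoc] using Complex.isPrimitiveRoot_exp_of_isCoprime M N hN.ne' hMN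
  have hprefactor : Filter.Tendsto (fun t : ℝ => (2 * ((k + 2 : ℕ) : ℂ) - 1) / 2 *
      Complex.exp ((2 * Real.pi * Complex.I * M / N - t) *
        ((2 * ((k + 2 : ℕ) : ℂ) - 3) ^ 2 / (8 * (2 * (k + 2 : ℕ) - 1)))))
      (nhdsWithin 0 (Set.Ioi 0)) (nhds ((2 * k + 3) / 2 *
        Complex.exp (2 * Real.pi * Complex.I * M * ((2 * ((k + 2 : ℕ) : ℂ) - 3) ^ 2) /
          (8 * (2 * (k + 2 : ℕ) - 1) * N)))) := by
    refine tendsto_nhdsWithin_of_tendsto_nhds (Continuous.tendsto' (by fun_prop) _ _ ?_)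
    rw [Complex.ofReal_zero, sub_zero, div_mul_div_comm, mul_comm (N : ℂ)]
    congr 2
    push_cast
    ring
  have hk : (2 * k + 3 : ℂ) ≠ 0 := mod_cast (by lia : 2 * k + 3 ≠ 0)
  convert hprefactor.mul (tendsto_P_mul_exp_neg hNodd hζ k) using 2
  · rw [Complex.ofReal_exp, Complex.ofReal_neg, ← Complex.exp_add, ← sub_eq_add_neg]
  · field_simp
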